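/- Let K ⊆ ℝⁿ be nonempty, compact, and convex, and F : K → ℝⁿ continuous. Then the variational inequality VI(F,K) has at least one solution. -/

import Mathlib

open RealInnerProductSpace

section Helpers

open MeasureTheory Metric

/-- The nearest-point projection on a nonempty compact convex set. -/
lemma exists_proj {E : Type*} [NormedAddCommGroup E] [InnerProductSpace ℝ E]
    (K : Set E) (hne : K.Nonempty) (hc : IsCompact K) (hv : Convex ℝ K) :
    ∃ P : E → E, (∀ x, P x ∈ K) ∧ (∀ x, ∀ y ∈ K, ⟪x - P x, y - P x⟫ ≤ 0) ∧
      LipschitzWith 1 P := by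
  choose P hPK hP using exists_norm_eq_iInf_of_complete_convex hne hc.isComplete hv
  have hP' : ∀ x, ∀ y ∈ K, ⟪x - P x, y - P x⟫ ≤ 0 := fun x =>
    (norm_eq_iInf_iff_real_inner_le_zero hv (hPK x)).1 (hP x)
  refine ⟨P, hPK, hP', LipschitzWith.of_dist_le_mul fun x y => ?_⟩
  have h1 := hP' x (P y) (hPK y)
  have h2 := hP' y (P x) (hPK x)
  have h3 : ‖P x - P y‖ ^ 2 ≤ ⟪x - y, P x - P y⟫ := by
    rw [← real_inner_self_eq_norm_sq]
    simp only [inner_sub_left, inner_sub_right] at *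
    linarith
  have h4 := real_inner_le_norm (x - y) (P x - P y)
  rw [dist_eq_norm, dist_eq_norm]
  simp only [NNReal.coe_one, one_mul]
  by_contra! h
  nlinarith [norm_nonneg (x - y)]

variable {E : Type*} [NormedAddCommGroup E] [InnerProductSpace ℝ E] [FiniteDimensional ℝ E]

/-- `det (1 + t A)` is a polynomial in `t` of degree at most the dimension. -/
lemma exists_poly_det (A : E →L[ℝ] E) :
    ∃ q : Polynomial ℝ, q.natDegree ≤ Module.finrank ℝ E ∧
      ∀ t : ℝ, q.eval t = (1 + t • A).det := by
  let b := Module.finBasis ℝ E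
  let M := LinearMap.toMatrix b b (A : E →ₗ[ℝ] E)
  refine ⟨Matrix.det ((Polynomial.X : Polynomial ℝ) • M.map Polynomial.C
    + (1 : Matrix _ _ ℝ).map Polynomial.C), ?_, fun t => ?_⟩
  · simpa using Polynomial.natDegree_det_X_add_C_le M 1
  · rw [← Polynomial.coe_evalRingHom, RingHom.map_det]
    have : (1 + t • A).det = LinearMap.det ((1 : E →ₗ[ℝ] E) + t • (A : E →ₗ[ℝ] E)) := rfl
    rw [this, ← LinearMap.det_toMatrix b,
      map_add (LinearMap.toMatrix b b), map_smul (LinearMap.toMatrix b b), LinearMap.toMatrix_one]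
    congr 1
    ext i j
    simp only [RingHom.mapMatrix_apply, Matrix.map_apply, Matrix.add_apply, Matrix.smul_apply,
      Polynomial.coe_evalRingHom, Polynomial.eval_add, smul_eq_mul, Polynomial.eval_mul,
      Polynomial.eval_X, Polynomial.eval_C, M]
    ring

/-- For small `t`, the deformed map sends the ball onto itself. -/
lemma image_ball (r : E → E) (R : ℝ) (hR : 0 < R) (hnorm : ∀ x, ‖r x‖ = R)
    (hid : ∀ x, ‖x‖ = R → r x = x) (L : NNReal)
    (hL : LipschitzOnWith L (fun x => r x - x) (closedBall 0 R))
    (t : ℝ) (ht0 : 0 < t) (ht1 : t ≤ 1) (htL : t * L < 1) :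
    Set.InjOn (fun x => x + t • (r x - x)) (closedBall 0 R) ∧
      (fun x => x + t • (r x - x)) '' (closedBall 0 R) = closedBall 0 R := by
  constructor
  · intro x hx y hy hxy
    have h1 := hL.dist_le_mul x hx y hy
    simp only [dist_eq_norm] at h1 hxy
    have h2 : x - y = -(t • ((r x - x) - (r y - y))) := by
      rw [smul_sub]
      rw [← sub_eq_zero] at hxy ⊢
      rw [← hxy]; abel
    have h3 : ‖x - y‖ ≤ t * L * ‖x - y‖ := by
      conv_lhs => rw [h2, norm_neg, norm_smul, Real.norm_of_nonneg ht0.le]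
      rw [mul_assoc]
      gcongr
    have h4 : ‖x - y‖ = 0 := by nlinarith [norm_nonneg (x - y)]
    exact sub_eq_zero.1 (norm_eq_zero.1 h4)
  · apply Set.Subset.antisymm
    · rintro _ ⟨x, hx, rfl⟩
      have : x + t • (r x - x) = (1 - t) • x + t • r x := by module
      simp only [this]
      exact convex_closedBall (0 : E) R hx (by simp [hnorm]) (by linarith) ht0.le (by ring)
    · intro y hy
      obtain ⟨P, hPK, hP, hPL⟩ := exists_proj (closedBall (0 : E) R) ⟨0, by simp [hR.le]⟩
        (isCompact_closedBall _ _) (convex_closedBall _ _)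
      let T : E → E := fun x => y - t • (r (P x) - P x)
      have hT : ContractingWith (t.toNNReal * L) T := by
        constructor
        · rw [← NNReal.coe_lt_coe]
          simpa [ht0.le] using htL
        · refine LipschitzWith.of_dist_le_mul fun a b => ?_
          have h1 := hL.dist_le_mul _ (hPK a) _ (hPK b)
          have h2 := hPL.dist_le_mul a b
          have : dist (T a) (T b) = t * dist (r (P a) - P a) (r (P b) - P b) := by
            simp only [T, dist_sub_left, dist_smul₀, Real.norm_of_nonneg ht0.le]
          rw [this]
          simp only [NNReal.coe_mul, Real.coe_toNNReal t ht0.le, NNReal.coe_one, one_mul] at h2 ⊢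
          rw [mul_assoc]
          have : (L : ℝ) * dist (P a) (P b) ≤ L * dist a b := by gcongr
          gcongr
          linarith
      obtain ⟨x, hx⟩ : ∃ x, T x = x := ⟨_, hT.fixedPoint_isFixedPt⟩
      have hxP : P x = x := by
        by_cases hlt : ‖P x‖ < R
        · by_contra hne
          have hcont : Filter.Tendsto (fun s : ℝ => P x + s • (x - P x)) (nhds 0)
              (nhds (P x)) := by
            have : Continuous (fun s : ℝ => P x + s • (x - P x)) := by fun_prop
            simpa using this.tendsto 0
          have hev : ∀ᶠ s in nhds (0 : ℝ), P x + s • (x - P x) ∈ ball (0 : E) R :=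
            hcont.eventually (isOpen_ball.mem_nhds (by simpa using hlt))
          obtain ⟨s, hs, hs0⟩ := ((hev.filter_mono nhdsWithin_le_nhds).and
            (self_mem_nhdsWithin : Set.Ioi (0 : ℝ) ∈ nhdsWithin 0 (Set.Ioi 0))).exists
          have h1 := hP x _ (ball_subset_closedBall hs)
          rw [add_sub_cancel_left, real_inner_smul_right, real_inner_self_eq_norm_sq] at h1
          have h2 : 0 < ‖x - P x‖ := norm_pos_iff.2 (sub_ne_zero.2 (Ne.symm hne))
          have h3 : 0 < s := hs0
          have : 0 < s * ‖x - P x‖ ^ 2 := by positivity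
          linarith
        · have heq : ‖P x‖ = R := le_antisymm (by simpa using hPK x) (not_lt.1 hlt)
          have hxy : y = x := by
            rw [← hx]; simp [T, hid _ heq]
          have h1 := hP x x (hxy ▸ hy)
          rw [real_inner_self_eq_norm_sq] at h1
          have : ‖x - P x‖ = 0 := by
            have := sq_nonneg ‖x - P x‖
            exact pow_eq_zero_iff (two_ne_zero) |>.1 (le_antisymm h1 this)
          exact (sub_eq_zero.1 (norm_eq_zero.1 this)).symm
      refine ⟨x, hxP ▸ hPK x, ?_⟩
      simp only [T, hxP] at hx
      exact (sub_eq_iff_eq_add.1 hx).symm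

/-- No `C¹` retraction to the sphere. -/
lemma no_retract (r : E → E) (R : ℝ) (hR : 0 < R) (hr : ContDiff ℝ 1 r)
    (hnorm : ∀ x, ‖r x‖ = R) (hid : ∀ x, ‖x‖ = R → r x = x) : False := by
  borelize E
  let μ : Measure E := Measure.addHaar
  let B : Set E := closedBall 0 R
  have hB : IsCompact B := isCompact_closedBall _ _
  let g : E → E := fun x => r x - x
  have hg : ContDiff ℝ 1 g := hr.sub contDiff_id
  let A : E → E →L[ℝ] E := fderiv ℝ g
  have hA : Continuous A := hg.continuous_fderiv (by norm_num)
  have hgd : ∀ x, HasFDerivAt g (A x) x := fun x =>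
    (hg.differentiable (by norm_num) x).hasFDerivAt
  obtain ⟨C, hC⟩ := hB.exists_bound_of_continuousOn hA.continuousOn
  let L : NNReal := C.toNNReal
  have hAL : ∀ x ∈ B, ‖A x‖ ≤ L := fun x hx => (hC x hx).trans (Real.le_coe_toNNReal C)
  have hL : LipschitzOnWith L g B :=
    (convex_closedBall (0 : E) R).lipschitzOnWith_of_nnnorm_fderiv_le
      (fun x _ => (hgd x).differentiableAt) (fun x hx => hAL x hx)
  -- determinant is positive near the identity
  obtain ⟨δ, hδ, hdet⟩ : ∃ δ > 0, ∀ T : E →L[ℝ] E, dist T 1 < δ → 0 < T.det := by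
    have h1 : (0 : ℝ) < (1 : E →L[ℝ] E).det := by
      have : (1 : E →L[ℝ] E).det = LinearMap.det (1 : E →ₗ[ℝ] E) := rfl
      rw [this, map_one]; norm_num
    exact Metric.eventually_nhds_iff.1
      ((ContinuousLinearMap.continuous_det (𝕜 := ℝ) (E := E)).continuousAt.eventually
        (lt_mem_nhds h1))
  obtain ⟨ε, hε, hε1, hεL, hεδ⟩ : ∃ ε : ℝ, 0 < ε ∧ ε ≤ 1 ∧ ε * L < 1 ∧ ε * L < δ := by
    have hL0 : (0 : ℝ) ≤ L := L.2
    have hm : 0 < min 1 δ := lt_min one_pos hδ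
    refine ⟨min 1 δ / (L + 1), by positivity, ?_, ?_, ?_⟩
    · rw [div_le_one (by positivity)]
      linarith [min_le_left 1 δ]
    · rw [div_mul_eq_mul_div, div_lt_one (by positivity)]
      nlinarith [min_le_left 1 δ]
    · rw [div_mul_eq_mul_div, div_lt_iff₀ (by positivity)]
      nlinarith [min_le_right 1 δ]
  have hint : ∀ t : ℝ, IntegrableOn (fun x => (1 + t • A x).det) B μ := fun t =>
    ContinuousOn.integrableOn_compact hB
      ((ContinuousLinearMap.continuous_det (𝕜 := ℝ) (E := E)).comp
        (continuous_const.add (hA.const_smul t))).continuousOn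
  have hvol : ∀ t : ℝ, 0 < t → t ≤ ε → ∫ x in B, (1 + t • A x).det ∂μ = μ.real B := by
    intro t ht0 htε
    have hL0 : (0 : ℝ) ≤ L := L.2
    have htL : t * L ≤ ε * L := by gcongr
    obtain ⟨hinj, himg⟩ := image_ball r R hR hnorm hid L hL t ht0 (htε.trans hε1)
      (htL.trans_lt hεL)
    have hcv := integral_image_eq_integral_abs_det_fderiv_smul μ
      (s := B) (f := fun x => x + t • (r x - x)) (f' := fun x => 1 + t • A x)
      hB.measurableSet
      (fun x _ => ((hasFDerivAt_id x).add ((hgd x).const_smul t)).hasFDerivWithinAt)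
      hinj (fun _ => (1 : ℝ))
    rw [himg] at hcv
    simp only [smul_eq_mul, mul_one, integral_const, MeasurableSet.univ,
      measureReal_restrict_apply, Set.univ_inter] at hcv
    rw [hcv]
    refine setIntegral_congr_fun hB.measurableSet fun x hx => ?_
    refine (abs_of_pos (hdet _ ?_)).symm
    rw [dist_eq_norm, add_sub_cancel_left, norm_smul, Real.norm_of_nonneg ht0.le]
    have := hAL x hx
    calc t * ‖A x‖ ≤ t * L := by gcongr
      _ < δ := by linarith
  -- at time one the determinant vanishes
  have hzero : ∀ x, (1 + (1 : ℝ) • A x).det = 0 := by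
    intro x
    have hd : HasFDerivAt r (1 + (1 : ℝ) • A x) x := by
      have := (hasFDerivAt_id x).add (hgd x)
      rw [one_smul]
      convert! this using 1
      ext y; simp [g]
    by_contra hne
    have hsurj : Function.Surjective (1 + (1 : ℝ) • A x : E →L[ℝ] E) := by
      have hu : IsUnit (LinearMap.det ((1 + (1 : ℝ) • A x : E →L[ℝ] E) : E →ₗ[ℝ] E)) :=
        isUnit_iff_ne_zero.2 hne
      have := (LinearMap.isUnit_iff_isUnit_det _).2 hu
      exact ((Module.End.isUnit_iff _).1 this).2
    obtain ⟨v, hv⟩ := hsurj (r x)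
    have h1 := hd.norm_sq.fderiv.symm
    have h2 : fderiv ℝ (fun y => ‖r y‖ ^ 2) x = 0 := by
      simp [hnorm]
    rw [h2] at h1
    have h3 := congrArg (fun T => T v) h1
    simp only [ContinuousLinearMap.smul_apply, ContinuousLinearMap.comp_apply, hv,
      innerSL_apply_apply, ContinuousLinearMap.zero_apply, real_inner_self_eq_norm_sq, hnorm] at h3
    have : 0 < R ^ 2 := by positivity
    simp at h3
    linarith
  -- Lagrange interpolation
  let d := Module.finrank ℝ E
  let s : Finset ℕ := Finset.range (d + 1)
  let v : ℕ → ℝ := fun i => ε / (i + 1)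
  have hv : Set.InjOn v s := by
    intro i _ j _ hij
    simp only [v] at hij
    have hi : (i : ℝ) + 1 ≠ 0 := by positivity
    have hj : (j : ℝ) + 1 ≠ 0 := by positivity
    rw [div_eq_div_iff hi hj] at hij
    have := mul_left_cancel₀ hε.ne' hij
    exact_mod_cast (add_right_cancel this).symm
  have hlag : ∀ x, (1 + (1 : ℝ) • A x).det =
      ∑ i ∈ s, (1 + v i • A x).det * (Lagrange.basis s v i).eval 1 := by
    intro x
    obtain ⟨q, hq, hqe⟩ := exists_poly_det (A x)
    have h1 : q.degree < s.card := by
      refine lt_of_le_of_lt Polynomial.degree_le_natDegree ?_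
      simp only [s, Finset.card_range]
      exact_mod_cast Nat.lt_succ_of_le hq
    have h2 := Lagrange.eq_interpolate hv h1
    have h3 := congrArg (Polynomial.eval 1) h2
    rw [hqe, Lagrange.interpolate_apply, Polynomial.eval_finsetSum] at h3
    simpa only [Polynomial.eval_mul, Polynomial.eval_C, hqe] using h3
  have hI : ∫ x in B, (1 + (1 : ℝ) • A x).det ∂μ = μ.real B := by
    simp only [hlag]
    rw [integral_finsetSum _ fun i _ => (hint (v i)).mul_const _]
    simp only [integral_mul_const]
    have : ∀ i ∈ s, (∫ x in B, (1 + v i • A x).det ∂μ) * (Lagrange.basis s v i).eval 1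
        = μ.real B * (Lagrange.basis s v i).eval 1 := by
      intro i _
      rw [hvol (v i) (by positivity)]
      exact div_le_self hε.le (by linarith [(Nat.cast_nonneg i : (0 : ℝ) ≤ i)])
    rw [Finset.sum_congr rfl this, ← Finset.mul_sum, ← Polynomial.eval_finsetSum,
      Lagrange.sum_basis hv (by simp [s])]
    simp
  simp only [hzero, integral_zero] at hI
  have hpos : 0 < μ.real B := by
    rw [measureReal_def, ENNReal.toReal_pos_iff]
    exact ⟨measure_closedBall_pos μ 0 hR, hB.measure_lt_top⟩
  linarith

/-- A smooth bounded map has a fixed point. -/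
lemma smooth_fixed (h : E → E) (M : ℝ) (hM : 0 < M) (hh : ContDiff ℝ 1 h)
    (hb : ∀ x, ‖h x‖ ≤ M) : ∃ x, h x = x := by
  by_contra! hne
  let χ : ContDiffBump (0 : E) := ⟨M, M + 1, hM, by linarith⟩
  let u : E → E := fun x => x - χ x • h x
  have hu : ContDiff ℝ 1 u := contDiff_id.sub (χ.contDiff.smul hh)
  have hu0 : ∀ x, u x ≠ 0 := by
    intro x hx
    have hx' : x = χ x • h x := sub_eq_zero.1 hx
    have hn : ‖x‖ ≤ M := by
      rw [hx', norm_smul, Real.norm_of_nonneg χ.nonneg]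
      have := hb x
      nlinarith [χ.nonneg (x := x), χ.le_one (x := x), norm_nonneg (h x)]
    have h1 : χ x = 1 := χ.one_of_mem_closedBall (by simpa [χ] using hn)
    rw [h1, one_smul] at hx'
    exact hne x hx'.symm
  refine no_retract (fun x => ((M + 1) / ‖u x‖) • u x) (M + 1) (by linarith) ?_ ?_ ?_
  · exact (contDiff_const.div (hu.norm ℝ hu0) fun x => norm_ne_zero_iff.2 (hu0 x)).smul hu
  · intro x
    rw [norm_smul, norm_div, norm_norm, div_mul_cancel₀ _ (norm_ne_zero_iff.2 (hu0 x))]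
    exact Real.norm_of_nonneg (by linarith)
  · intro x hx
    have h0 : χ x = 0 := χ.zero_of_le_dist (by simp [χ, hx])
    have h1 : u x = x := by simp [u, h0]
    simp only [h1, hx]
    rw [div_self (by linarith), one_smul]

/-- A continuous bounded map has a fixed point. -/
lemma continuous_fixed (h : E → E) (M : ℝ) (hM : 0 < M) (hh : Continuous h)
    (hb : ∀ x, ‖h x‖ ≤ M) : ∃ x, h x = x := by
  by_contra! hne
  have hK : IsCompact (closedBall (0 : E) (M + 1)) := isCompact_closedBall _ _
  obtain ⟨x₀, -, hx₀⟩ := hK.exists_isMinOn ⟨0, by simp; linarith⟩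
    (f := fun x => dist (h x) x) (by fun_prop)
  let ε : ℝ := min 1 (dist (h x₀) x₀)
  have hε : 0 < ε := lt_min one_pos (dist_pos.2 (hne x₀))
  obtain ⟨g, hg, hgd, -⟩ := hh.exists_contDiff_approx 1 (ε := fun _ => ε) continuous_const
    (fun _ => hε)
  have hgb : ∀ x, ‖g x‖ ≤ M + 1 := by
    intro x
    have h1 := hgd x
    rw [dist_eq_norm] at h1
    have h2 := norm_sub_norm_le (g x) (h x)
    have h3 : ε ≤ 1 := min_le_left _ _
    linarith [hb x]
  obtain ⟨x, hx⟩ := smooth_fixed g (M + 1) (by linarith) hg hgb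
  have h1 : x ∈ closedBall (0 : E) (M + 1) := by
    have := hgb x
    rw [hx] at this
    simpa using this
  have h2 : dist (h x₀) x₀ ≤ dist (h x) x := hx₀ h1
  have h3 := hgd x
  rw [hx, dist_comm] at h3
  have h4 : ε ≤ dist (h x₀) x₀ := min_le_right _ _
  linarith

end Helpers

/-- existence of a VI solution on a nonempty compact convex set for
continuous F (Hartman–Stampacchia / Brouwer). -/
theorem vi_existence_compact_convex
    {n : ℕ} (K : Set (EuclideanSpace ℝ (Fin n)))
    (hKne : K.Nonempty) (hKcomp : IsCompact K) (hKconv : Convex ℝ K)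
    (F : EuclideanSpace ℝ (Fin n) → EuclideanSpace ℝ (Fin n))
    (hF : ContinuousOn F K) :
    ∃ x ∈ K, ∀ y ∈ K, 0 ≤ ⟪F x, y - x⟫ := by
  obtain ⟨P, hPK, hP, hPL⟩ := exists_proj K hKne hKcomp hKconv
  obtain ⟨M, hM⟩ := hKcomp.isBounded.exists_norm_le
  have hFP : Continuous fun x => F (P x) :=
    hF.comp_continuous hPL.continuous hPK
  obtain ⟨x, hx⟩ := continuous_fixed (fun x => P (P x - F (P x))) (max M 1) (by positivity)
    (hPL.continuous.comp (hPL.continuous.sub hFP))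
    (fun x => (hM _ (hPK _)).trans (le_max_left _ _))
  have hxK : x ∈ K := hx ▸ hPK _
  have hPx : P x = x := by
    have h1 := hP x x hxK
    rw [real_inner_self_eq_norm_sq] at h1
    have : ‖x - P x‖ = 0 :=
      pow_eq_zero_iff two_ne_zero |>.1 (le_antisymm h1 (sq_nonneg _))
    exact (sub_eq_zero.1 (norm_eq_zero.1 this)).symm
  refine ⟨x, hxK, fun y hy => ?_⟩
  simp only [hPx] at hx
  have h1 := hP (x - F x) y hy
  rw [hx, sub_sub_cancel_left, inner_neg_left] at h1
  linarith
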